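/- If a localization pair A is fibrant in the model structure on Lp with componentwise Morita equivalences and the natural morphism η_A: A → Q(A) is a weak equivalence in that model structure, then A is Q-fibrant, i.e., the morphism from A to the terminal localization pair is a Q-fibration. -/

import Mathlib

/-!
Fix a cofibration `i : X ⟶ Y` with `Q i` a weak equivalence and a map `f : X ⟶ A`, and choose a
weak equivalence `ρ : Q A ⟶ R` with `R` fibrant. A square from a cofibration to a fibration which
factors through a weak equivalence has a lift. This is applied twice: through the weak equivalence
`Q i` it extends `η_X ≫ Q f ≫ ρ = f ≫ η_A ≫ ρ` along `i` to a map `Y ⟶ R`, and through the weak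
equivalence `η_A ≫ ρ` it then extends `f` itself along `i`, since `A` is fibrant.
-/

open CategoryTheory Limits

universe w v u v' u'

namespace DGPaper

/-- A morphism `f` is a retract of a morphism `g`. -/
def IsRetract {C : Type u} [Category.{v} C] {X Y X' Y' : C}
    (f : X ⟶ Y) (g : X' ⟶ Y') : Prop :=
  ∃ (i : X ⟶ X') (r : X' ⟶ X) (i' : Y ⟶ Y') (r' : Y' ⟶ Y),
    i ≫ r = 𝟙 X ∧ i' ≫ r' = 𝟙 Y ∧ i ≫ g = f ≫ i' ∧ r ≫ f = g ≫ r'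

/-- A (Quillen) model structure on a category `C`: classes of weak equivalences,
fibrations and cofibrations, satisfying two-out-of-three, closure under retracts,
the lifting axioms and the factorization axioms. -/
structure ModelStructure (C : Type u) [Category.{v} C] where
  weq : MorphismProperty C
  fib : MorphismProperty C
  cof : MorphismProperty C
  weq_comp : ∀ {X Y Z : C} (f : X ⟶ Y) (g : Y ⟶ Z), weq f → weq g → weq (f ≫ g)
  weq_cancel_left : ∀ {X Y Z : C} (f : X ⟶ Y) (g : Y ⟶ Z), weq f → weq (f ≫ g) → weq g
  weq_cancel_right : ∀ {X Y Z : C} (f : X ⟶ Y) (g : Y ⟶ Z), weq g → weq (f ≫ g) → weq f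
  weq_retract : ∀ {X Y X' Y' : C} (f : X ⟶ Y) (g : X' ⟶ Y'),
    IsRetract f g → weq g → weq f
  fib_retract : ∀ {X Y X' Y' : C} (f : X ⟶ Y) (g : X' ⟶ Y'),
    IsRetract f g → fib g → fib f
  cof_retract : ∀ {X Y X' Y' : C} (f : X ⟶ Y) (g : X' ⟶ Y'),
    IsRetract f g → cof g → cof f
  lift_trivCof_fib : ∀ {A B X Y : C} (i : A ⟶ B) (p : X ⟶ Y),
    cof i → weq i → fib p → HasLiftingProperty i p
  lift_cof_trivFib : ∀ {A B X Y : C} (i : A ⟶ B) (p : X ⟶ Y),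
    cof i → fib p → weq p → HasLiftingProperty i p
  fact_trivCof_fib : ∀ {X Y : C} (f : X ⟶ Y),
    ∃ (Z : C) (i : X ⟶ Z) (p : Z ⟶ Y), cof i ∧ weq i ∧ fib p ∧ i ≫ p = f
  fact_cof_trivFib : ∀ {X Y : C} (f : X ⟶ Y),
    ∃ (Z : C) (i : X ⟶ Z) (p : Z ⟶ Y), cof i ∧ fib p ∧ weq p ∧ i ≫ p = f

variable {C : Type u} [Category.{v} C]

/-- Morphisms having the right lifting property with respect to every morphism in `P`. -/
def rlp (P : MorphismProperty C) : MorphismProperty C :=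
  fun _ _ p => ∀ ⦃A B : C⦄ (i : A ⟶ B), P i → HasLiftingProperty i p

/-- Morphisms having the left lifting property with respect to every morphism in `P`. -/
def llp (P : MorphismProperty C) : MorphismProperty C :=
  fun _ _ i => ∀ ⦃X Y : C⦄ (p : X ⟶ Y), P p → HasLiftingProperty i p

/-- The union of two classes of morphisms. -/
def mpUnion (P Q : MorphismProperty C) : MorphismProperty C :=
  fun _ _ f => P f ∨ Q f

/-- The class of morphisms consisting of the single morphism `f`. -/
def mpSingleton {X Y : C} (f : X ⟶ Y) : MorphismProperty C :=
  fun A B g => ∃ (_ : A = X) (_ : B = Y), HEq g f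

/-- `M` is cofibrantly generated, with set of generating cofibrations `I` and set of
generating trivial cofibrations `J`: the fibrations are the morphisms with the right
lifting property with respect to `J`, the trivial fibrations are the morphisms with
the right lifting property with respect to `I`, and the (trivial) cofibrations are
generated accordingly. -/
structure IsCofibrantlyGenerated (M : ModelStructure C) (I J : MorphismProperty C) : Prop where
  fib_eq : M.fib = rlp J
  trivFib_eq : (fun _ _ f => M.fib f ∧ M.weq f : MorphismProperty C) = rlp I
  cof_eq : M.cof = llp (rlp I)
  trivCof_eq : (fun _ _ f => M.cof f ∧ M.weq f : MorphismProperty C) = llp (rlp J)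

/-- An object is fibrant if the morphism to the terminal object is a fibration. -/
def Fibrant (M : ModelStructure C) [HasTerminal C] (X : C) : Prop :=
  M.fib (terminal.from X)

/-- An object is cofibrant if the morphism from the initial object is a cofibration. -/
def Cofibrant (M : ModelStructure C) [HasInitial C] (X : C) : Prop :=
  M.cof (initial.to X)

/-- The `Q`-weak equivalences of localization pairs: the morphisms sent by the
dg quotient functor `Q` to weak equivalences. -/
def QWeq {Lp : Type u'} [Category.{v'} Lp] (M : ModelStructure Lp) (Q : Lp ⥤ Lp) :
    MorphismProperty Lp :=
  fun _ _ f => M.weq (Q.map f)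

/-- The `Q`-fibrations: morphisms with the right lifting property with respect to
all cofibrations which are `Q`-weak equivalences. -/
def QFib {Lp : Type u'} [Category.{v'} Lp] (M : ModelStructure Lp) (Q : Lp ⥤ Lp) :
    MorphismProperty Lp :=
  fun _ _ p => ∀ ⦃A B : Lp⦄ (i : A ⟶ B), M.cof i → QWeq M Q i → HasLiftingProperty i p

namespace ModelStructure

theorem hasLift_horiz_comp (M : ModelStructure C) {X Y S T A B : C} {a : X ⟶ S} {i : X ⟶ Y}
    {w : S ⟶ T} {b : Y ⟶ T} {f : S ⟶ A} {p : A ⟶ B} {g : T ⟶ B}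
    (hi : M.cof i) (hw : M.weq w) (hp : M.fib p) (sq : CommSq a i w b) (sq' : CommSq f w p g) :
    (sq.horiz_comp sq').HasLift := by
  -- If `w = j ≫ q` with `j` a trivial cofibration and `q` a trivial fibration, then `i` lifts
  -- against `q` and `j` lifts against `p`; the diagonal is the composite of the two lifts.
  obtain ⟨Z, j, q, hj, hjw, hq, rfl⟩ := M.fact_trivCof_fib w
  have hqw : M.weq q := M.weq_cancel_left j q hjw hw
  have : HasLiftingProperty i q := M.lift_cof_trivFib i q hi hq hqw
  have : HasLiftingProperty j p := M.lift_trivCof_fib j p hj hjw hp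
  have sq_iq : CommSq (a ≫ j) i q b := ⟨by simpa using sq.w⟩
  have sq_jp : CommSq f j p (q ≫ g) := ⟨by simpa using sq'.w⟩
  exact ⟨⟨⟨sq_iq.lift ≫ sq_jp.lift, by simp, by simp⟩⟩⟩

variable [HasTerminal C]

theorem exists_weq_to_fibrant (M : ModelStructure C) (X : C) :
    ∃ (R : C) (ρ : X ⟶ R), M.weq ρ ∧ Fibrant M R := by
  obtain ⟨R, ρ, q, -, hρ, hq, -⟩ := M.fact_trivCof_fib (terminal.from X)
  obtain rfl : q = terminal.from R := Subsingleton.elim _ _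
  exact ⟨R, ρ, hρ, hq⟩

theorem exists_extension_of_commSq (M : ModelStructure C) {X Y S T R : C} {a : X ⟶ S} {i : X ⟶ Y}
    {w : S ⟶ T} {b : Y ⟶ T} (hi : M.cof i) (hw : M.weq w) (hR : Fibrant M R)
    (sq : CommSq a i w b) (k : S ⟶ R) : ∃ h : Y ⟶ R, i ≫ h = a ≫ k := by
  have sq' : CommSq k w (terminal.from R) (terminal.from T) := ⟨Subsingleton.elim _ _⟩
  have := M.hasLift_horiz_comp hi hw hR sq sq'
  exact ⟨(sq.horiz_comp sq').lift, (sq.horiz_comp sq').fac_left⟩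

theorem exists_extension_of_comp_weq (M : ModelStructure C) {X Y A R : C} {i : X ⟶ Y}
    {f : X ⟶ A} {w : A ⟶ R} {h : Y ⟶ R} (hi : M.cof i) (hw : M.weq w) (hA : Fibrant M A)
    (hh : i ≫ h = f ≫ w) : ∃ l : Y ⟶ A, i ≫ l = f := by
  simpa only [Category.comp_id] using M.exists_extension_of_commSq hi hw hA ⟨hh.symm⟩ (𝟙 A)

end ModelStructure

theorem QWeq.exists_extension {M : ModelStructure C} [HasTerminal C] {Q : C ⥤ C} {X Y R : C}
    {i : X ⟶ Y} (hQi : QWeq M Q i) (hi : M.cof i) (η : 𝟭 C ⟶ Q) (hR : Fibrant M R)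
    (k : Q.obj X ⟶ R) : ∃ h : Y ⟶ R, i ≫ h = η.app X ≫ k :=
  M.exists_extension_of_commSq hi hQi hR ⟨(η.naturality i).symm⟩ k

/-- If a localization pair `A` is fibrant in the model structure on
`Lp` with componentwise Morita equivalences and the natural morphism `η_A : A ⟶ Q(A)`
is a weak equivalence in that model structure, then `A` is `Q`-fibrant, i.e. the
morphism from `A` to the terminal localization pair is a `Q`-fibration. -/
theorem statement11
    -- the category of small dg categories over the field `k`, and its Morita equivalences
    (dgcat : Type u) [Category.{v} dgcat]
    (MoritaEq : MorphismProperty dgcat)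
    -- the category `Lp` of localization pairs, with the two evaluation functors
    (Lp : Type u') [Category.{v'} Lp] [HasTerminal Lp]
    (Ev0 Ev1 : Lp ⥤ dgcat)
    -- the model structure on `Lp` with componentwise Morita equivalences
    (M : ModelStructure Lp)
    (hweq : ∀ {A B : Lp} (f : A ⟶ B),
      M.weq f ↔ MoritaEq (Ev0.map f) ∧ MoritaEq (Ev1.map f))
    -- the Drinfeld dg quotient functor `Q : Lp ⥤ Lp` with its natural morphism
    -- `η_A : A ⟶ Q(A)`
    (Q : Lp ⥤ Lp) (η : 𝟭 Lp ⟶ Q)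
    -- a fibrant localization pair `A` such that `η_A` is a weak equivalence
    (A : Lp) (hA : Fibrant M A) (hηA : M.weq (η.app A)) :
    QFib M Q (terminal.from A) := by
  intro X Y i hi hQi
  refine ⟨fun {f g} _ => ?_⟩
  obtain ⟨R, ρ, hρ, hR⟩ := M.exists_weq_to_fibrant (Q.obj A)
  obtain ⟨h, hh⟩ : ∃ h : Y ⟶ R, i ≫ h = η.app X ≫ Q.map f ≫ ρ :=
    hQi.exists_extension hi η hR (Q.map f ≫ ρ)
  have hfac : i ≫ h = f ≫ η.app A ≫ ρ := hh.trans (η.naturality_assoc f ρ).symm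
  have hw : M.weq (η.app A ≫ ρ) := M.weq_comp _ _ hηA hρ
  obtain ⟨l, hl⟩ : ∃ l : Y ⟶ A, i ≫ l = f := M.exists_extension_of_comp_weq hi hw hA hfac
  exact ⟨⟨⟨l, hl, Subsingleton.elim _ _⟩⟩⟩

end DGPaper
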